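/- Fix ε₀ ∈ (0,1]. There exists a constant C > 0, depending only on n, P, c, c₀ and ε₀, such that for every t ∈ [ε₀,1], every solution φ of the continuity-method equation at parameter t, and every λ ≥ 1, the sublevel set A_λ := {x ∈ ℝⁿ : w_t(x) ≤ m_t + λ} (where w_t := tφ + (1−t)φ⁰ and m_t := inf_{ℝⁿ} w_t) has Lebesgue measure vol(A_λ) ≤ C λⁿ e^{m_t/2}. -/

import Mathlib

open MeasureTheory

noncomputable section

/-- Dot product on `Fin n → ℝ`. -/
def dotp {n : ℕ} (x y : Fin n → ℝ) : ℝ := ∑ j, x j * y j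

/-- The affine functions `lᵢ(y) = ⟨y, n⁽ⁱ⁾⟩ + 1`. -/
def lfun {n d : ℕ} (N : Fin d → Fin n → ℤ) (i : Fin d) (y : Fin n → ℝ) : ℝ :=
  (∑ j, y j * (N i j : ℝ)) + 1

/-- The dual polytope `P = {y : ⟨y, n⁽ⁱ⁾⟩ ≥ -1 for all i}`. -/
def Pset {n d : ℕ} (N : Fin d → Fin n → ℤ) : Set (Fin n → ℝ) :=
  {y | ∀ i, (∑ j, y j * (N i j : ℝ)) ≥ -1}

/-- The function `u⁰(y) = ∑ᵢ lᵢ(y) log lᵢ(y)`. -/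
def u0 {n d : ℕ} (N : Fin d → Fin n → ℤ) (y : Fin n → ℝ) : ℝ :=
  ∑ i, lfun N i y * Real.log (lfun N i y)

/-- The Legendre transform `φ⁰(x) = sup_{y ∈ P°} (⟨x,y⟩ - u⁰(y))`. -/
def phi0 {n d : ℕ} (N : Fin d → Fin n → ℤ) (x : Fin n → ℝ) : ℝ :=
  sSup ((fun y => dotp x y - u0 N y) '' interior (Pset N))

/-- The gradient of a function on `Fin n → ℝ`. -/
def grad {n : ℕ} (f : (Fin n → ℝ) → ℝ) (x : Fin n → ℝ) : Fin n → ℝ :=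
  fun p => fderiv ℝ f x (Pi.single p 1)

/-- Second partial derivatives (Hessian matrix) of a function on `Fin n → ℝ`. -/
def hess {n : ℕ} (f : (Fin n → ℝ) → ℝ) (x : Fin n → ℝ) : Matrix (Fin n) (Fin n) ℝ :=
  Matrix.of fun p q => fderiv ℝ (fun z => fderiv ℝ f z (Pi.single q 1)) x (Pi.single p 1)

/-- The Euclidean norm of `x ∈ ℝⁿ`. -/
def eucNorm {n : ℕ} (x : Fin n → ℝ) : ℝ := Real.sqrt (∑ j, x j ^ 2)

/-- The function `w_t = tφ + (1-t)φ⁰`. -/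
def wfun {n d : ℕ} (N : Fin d → Fin n → ℤ) (t : ℝ) (φ : (Fin n → ℝ) → ℝ)
    (x : Fin n → ℝ) : ℝ :=
  t * φ x + (1 - t) * phi0 N x

/-- A solution of the continuity-method equation at parameter `t`: a smooth strictly
convex `φ : ℝⁿ → ℝ` whose gradient map is a diffeomorphism from `ℝⁿ` onto `P°`,
satisfying `det D²φ = exp(-c₀ - w_t - ⟨c, Dφ⟩)` with `w_t = tφ + (1-t)φ⁰`. -/
def IsSolution {n d : ℕ} (N : Fin d → Fin n → ℤ) (c : Fin n → ℝ) (c₀ t : ℝ)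
    (φ : (Fin n → ℝ) → ℝ) : Prop :=
  ContDiff ℝ (⊤ : ℕ∞) φ ∧ StrictConvexOn ℝ Set.univ φ ∧
  Set.BijOn (grad φ) Set.univ (interior (Pset N)) ∧
  ContDiffOn ℝ (⊤ : ℕ∞) (Function.invFun (grad φ)) (interior (Pset N)) ∧
  ∀ x, (hess φ x).det = Real.exp (-c₀ - wfun N t φ x - dotp c (grad φ x))

/-!
Write `w = tφ + (1 - t)φ⁰`, let `x₀` be its minimizer, `m` its minimum and `K = {w ≤ m + 1} - x₀`.
A matrix `T` with columns in `K` and maximal `|det T|` satisfies `K ⊆ T [-1, 1]ⁿ`, and `T` maps the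
cube `[0, 1/n]ⁿ` into `K` by convexity. On that cube `a ↦ w (x₀ + T a)` oscillates by at most `1`,
so subtracting a paraboloid of opening `k = 9n²` yields an interior maximum; there the Hessian of
`a ↦ tφ (x₀ + T a)` is at most `k`, that is `(det T)² tⁿ det D²φ ≤ kⁿ` at some point of `x₀ + K`.
The equation bounds `det D²φ` below by a multiple of `exp (-m)` on `x₀ + K`, whence
`|det T| ≤ C exp (m / 2)`. Finally `{w ≤ m + lam} ⊆ x₀ + lam • K` by convexity.
-/

section SecondDerivative

open Filter Metric Set Topology
open scoped Matrix

variable {E F : Type*} [NormedAddCommGroup E] [NormedSpace ℝ E]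
  [NormedAddCommGroup F] [NormedSpace ℝ F]

lemma deriv_deriv_nonpos_of_isLocalMax {g : ℝ → ℝ} {x : ℝ} (hg : IsLocalMax g x)
    (hgc : ContinuousAt g x) : deriv (deriv g) x ≤ 0 := by
  by_contra! hpos
  have hmin : IsLocalMin g x := isLocalMin_of_deriv_deriv_pos hpos hg.deriv_eq_zero hgc
  have hconst : g =ᶠ[𝓝 x] fun _ => g x := by
    filter_upwards [hg, hmin] with s using le_antisymm
  simp [hconst.deriv.deriv_eq] at hpos

lemma hasDerivAt_comp_line {f : E → F} (hf : Differentiable ℝ f) (x v : E) (s : ℝ) :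
    HasDerivAt (fun s : ℝ => f (x + s • v)) (fderiv ℝ f (x + s • v) v) s := by
  have hline : HasDerivAt (fun s : ℝ => x + s • v) v s := by
    simpa using ((hasDerivAt_id s).smul_const v).const_add x
  exact (hf _).hasFDerivAt.comp_hasDerivAt s hline

lemma fderiv_fderiv_apply_self_le {f : E → ℝ} (hf : ContDiff ℝ 2 f) {x v : E} {k : ℝ}
    (h : ∀ᶠ s in 𝓝 (0 : ℝ), f (x + s • v) + f (x + s • -v) ≤ 2 * f x + k * s ^ 2) :
    fderiv ℝ (fderiv ℝ f) x v v ≤ k := by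
  have hf₁ : Differentiable ℝ f := hf.differentiable (by norm_num)
  have hf₂ : Differentiable ℝ (fderiv ℝ f) :=
    (hf.fderiv_right (m := 1) (by norm_num)).differentiable (by norm_num)
  let g : ℝ → ℝ := fun s => f (x + s • v) + f (x + s • -v) - k * s ^ 2
  have hg (s : ℝ) : HasDerivAt g
      (fderiv ℝ f (x + s • v) v + fderiv ℝ f (x + s • -v) (-v) - k * (2 * s)) s := by
    convert! ((hasDerivAt_comp_line hf₁ x v s).add (hasDerivAt_comp_line hf₁ x (-v) s)).sub
      ((hasDerivAt_pow 2 s).const_mul k) using 1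
    simp
  have hg' : HasDerivAt (deriv g) (2 * (fderiv ℝ (fderiv ℝ f) x v v - k)) 0 := by
    rw [funext fun s => (hg s).deriv]
    have hline (u : E) : HasDerivAt (fun s : ℝ => fderiv ℝ f (x + s • u) u)
        (fderiv ℝ (fderiv ℝ f) x u u) 0 := by
      simpa using (hasDerivAt_comp_line hf₂ x u 0).clm_apply (hasDerivAt_const 0 u)
    convert! ((hline v).add (hline (-v))).sub
      (((hasDerivAt_id (0 : ℝ)).const_mul 2).const_mul k) using 1
    simp only [map_neg, neg_apply]
    ring
  have hmax : IsLocalMax g 0 := by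
    filter_upwards [h] with s hs
    simp only [g, zero_smul, add_zero]
    linarith
  have := deriv_deriv_nonpos_of_isLocalMax hmax (hg 0).continuousAt
  rw [hg'.deriv] at this
  linarith

lemma two_mul_le_add_of_convexOn {V : Type*} [AddCommGroup V] [Module ℝ V] {p : V → ℝ}
    (hp : ConvexOn ℝ univ p) (x v : V) :
    2 * p x ≤ p (x + v) + p (x + -v) := by
  have h := hp.2 (mem_univ (x + v)) (mem_univ (x + -v)) (by norm_num : (0 : ℝ) ≤ 1 / 2)
    (by norm_num : (0 : ℝ) ≤ 1 / 2) (by norm_num)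
  have hmid : (1 / 2 : ℝ) • (x + v) + (1 / 2 : ℝ) • (x + -v) = x := by module
  rw [hmid, smul_eq_mul, smul_eq_mul] at h
  linarith

lemma fderiv_fderiv_apply_self_nonneg {f : E → ℝ} (hf : ContDiff ℝ 2 f)
    (hconv : ConvexOn ℝ univ f) (x v : E) : 0 ≤ fderiv ℝ (fderiv ℝ f) x v v := by
  have h : fderiv ℝ (fderiv ℝ (-f)) x v v ≤ 0 :=
    fderiv_fderiv_apply_self_le hf.neg <| .of_forall fun s => by
      have := two_mul_le_add_of_convexOn hconv x (s • v)
      simp only [smul_neg]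
      linarith
  have hneg : fderiv ℝ (-f) = -fderiv ℝ f := funext fun _ => fderiv_neg
  rw [hneg, fderiv_neg] at h
  simpa using h

lemma norm_sq_le_dotProduct_self {ι : Type*} [Fintype ι] (v : ι → ℝ) : ‖v‖ ^ 2 ≤ v ⬝ᵥ v := by
  have hv : 0 ≤ v ⬝ᵥ v := Finset.sum_nonneg fun _ _ => mul_self_nonneg _
  rw [← Real.le_sqrt (norm_nonneg v) hv, pi_norm_le_iff_of_nonneg (Real.sqrt_nonneg _)]
  intro i
  refine Real.abs_le_sqrt ?_
  rw [sq]
  exact Finset.single_le_sum (f := fun j => v j * v j) (fun _ _ => mul_self_nonneg _)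
    (Finset.mem_univ i)

-- The point is an interior maximum of `f + p - k/2 |a - c|²`, where symmetric second differences of
-- the convex `p` are nonnegative.
lemma exists_mem_ball_fderiv_fderiv_le {ι : Type*} [Fintype ι] {f p : (ι → ℝ) → ℝ}
    (hf : ContDiff ℝ 2 f) (hp : ConvexOn ℝ univ p) {c : ι → ℝ} {r k : ℝ} (hr : 0 < r) (hk : 0 ≤ k)
    (h : ∀ a ∈ sphere c r, f a + p a < f c + p c + k / 2 * r ^ 2) :
    ∃ a ∈ ball c r, ∀ v, fderiv ℝ (fderiv ℝ f) a v v ≤ k * (v ⬝ᵥ v) := by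
  let G : (ι → ℝ) → ℝ := fun a => f a + p a - k / 2 * ((a - c) ⬝ᵥ (a - c))
  have hG : Continuous G := by
    have := hf.continuous
    have := hp.locallyLipschitz.continuous
    fun_prop
  have hsphere : ∀ a ∈ closedBall c r \ ball c r, G a < G c := by
    rw [closedBall_sdiff_ball]
    intro a ha
    have hsq : r ^ 2 ≤ (a - c) ⬝ᵥ (a - c) := by
      simpa only [mem_sphere_iff_norm.1 ha] using norm_sq_le_dotProduct_self (a - c)
    have := h a ha
    have := mul_le_mul_of_nonneg_left hsq (by positivity : 0 ≤ k / 2)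
    simp only [G, sub_self, zero_dotProduct]
    linarith
  obtain ⟨a, ha, hmax⟩ := (isCompact_closedBall c r).exists_isLocalMax_mem_open
    ball_subset_closedBall hG.continuousOn (mem_closedBall_self hr.le) hsphere isOpen_ball
  refine ⟨a, ha, fun v => fderiv_fderiv_apply_self_le hf ?_⟩
  have hline (u : ι → ℝ) : ∀ᶠ s : ℝ in 𝓝 0, G (a + s • u) ≤ G a := by
    have : Tendsto (fun s : ℝ => a + s • u) (𝓝 0) (𝓝 a) := by
      simpa using (by fun_prop : Continuous fun s : ℝ => a + s • u).tendsto 0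
    exact this.eventually hmax
  filter_upwards [hline v, hline (-v)] with s hs hs'
  have hpar : (a + s • v - c) ⬝ᵥ (a + s • v - c) + (a + s • -v - c) ⬝ᵥ (a + s • -v - c) =
      2 * ((a - c) ⬝ᵥ (a - c)) + 2 * (s ^ 2 * (v ⬝ᵥ v)) := by
    simp only [dotProduct, Finset.mul_sum, ← Finset.sum_add_distrib]
    exact Finset.sum_congr rfl fun i _ => by simp; ring
  have hmid := two_mul_le_add_of_convexOn hp a (s • v)
  simp only [G] at hs hs'
  rw [← smul_neg] at hmid
  linear_combination hs + hs' + hmid + k / 2 * hpar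

end SecondDerivative

section Growth

open Filter Metric Set Topology

variable {E : Type*} [NormedAddCommGroup E] [NormedSpace ℝ E] {f : E → ℝ} {z : E}

lemma le_of_convexOn_of_fderiv_eq_zero (hf : ConvexOn ℝ univ f) (hd : Differentiable ℝ f)
    (hz : fderiv ℝ f z = 0) (x : E) : f z ≤ f x := by
  have hline : ConvexOn ℝ univ (fun s : ℝ => f (z + s • (x - z))) := by
    have := hf.comp_affineMap (AffineMap.lineMap z x : ℝ →ᵃ[ℝ] E)
    simpa [Function.comp_def, AffineMap.lineMap_apply, add_comm] using this
  have hslope := hline.le_slope_of_hasDerivAt (mem_univ 0) (mem_univ 1) one_pos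
    (hasDerivAt_comp_line hd z (x - z) 0)
  simpa [slope_def_field, hz] using hslope

lemma tendsto_cocompact_atTop_of_strictConvexOn [FiniteDimensional ℝ E]
    (hf : StrictConvexOn ℝ univ f) (hz : ∀ x, f z ≤ f x) : Tendsto f (cocompact E) atTop := by
  have : ProperSpace E := FiniteDimensional.proper ℝ E
  have hcont : Continuous f := hf.convexOn.locallyLipschitz.continuous
  have hlt : ∀ u ∈ sphere z 1, f z < f u := by
    intro u hu
    refine (hz u).lt_of_ne fun heq => ne_of_mem_sphere hu one_ne_zero ?_
    exact hf.eq_of_isMinOn (fun x _ => heq ▸ hz x) (fun x _ => hz x) (mem_univ u) (mem_univ z)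
  obtain ⟨b, hb, hsphere⟩ := (isCompact_sphere z 1).exists_forall_le' hcont.continuousOn hlt
  have hgrow : ∀ᶠ x in cocompact E, f z + (b - f z) * dist x z ≤ f x := by
    filter_upwards [(tendsto_dist_right_cocompact_atTop z).eventually_ge_atTop 1] with x hx
    have hpos : 0 < dist x z := one_pos.trans_le hx
    have hu : z + (dist x z)⁻¹ • (x - z) ∈ sphere z 1 := by
      simp [norm_smul, ← dist_eq_norm, hpos.ne']
    have hconv := hf.convexOn.2 (mem_univ z) (mem_univ x) (sub_nonneg.2 (inv_le_one_of_one_le₀ hx))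
      (inv_nonneg.2 hpos.le) (by ring)
    have hcomb : (1 - (dist x z)⁻¹) • z + (dist x z)⁻¹ • x = z + (dist x z)⁻¹ • (x - z) := by
      module
    have := (hsphere _ hu).trans (hcomb ▸ hconv)
    simp only [smul_eq_mul] at this
    field_simp at this
    linarith
  refine tendsto_atTop_mono' _ hgrow (tendsto_atTop_add_const_left _ _ ?_)
  exact (tendsto_dist_right_cocompact_atTop z).const_mul_atTop (sub_pos.2 hb)

end Growth

section Hessian

open Filter Metric Set Topology
open scoped Matrix

variable {n : ℕ} {f p : (Fin n → ℝ) → ℝ}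

lemma hess_apply (hf : ContDiff ℝ 2 f) (x : Fin n → ℝ) (i j : Fin n) :
    hess f x i j = fderiv ℝ (fderiv ℝ f) x (Pi.single i 1) (Pi.single j 1) := by
  have hd : DifferentiableAt ℝ (fderiv ℝ f) x :=
    (hf.fderiv_right (m := 1) (by norm_num)).differentiable (by norm_num) x
  simp [hess, fderiv_clm_apply hd (differentiableAt_const _)]

lemma dotProduct_hess_mulVec (hf : ContDiff ℝ 2 f) (x u v : Fin n → ℝ) :
    u ⬝ᵥ hess f x *ᵥ v = fderiv ℝ (fderiv ℝ f) x u v := by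
  have hsingle (w : Fin n → ℝ) : ∑ i, w i • (Pi.single i 1 : Fin n → ℝ) = w := by
    ext i
    simp [Finset.sum_apply, Pi.single_apply]
  conv_rhs => rw [← hsingle u, ← hsingle v]
  simp only [map_sum, map_smul, sum_apply, smul_apply, smul_eq_mul, dotProduct, Matrix.mulVec,
    hess_apply hf, Finset.mul_sum]
  rw [Finset.sum_comm]
  exact Finset.sum_congr rfl fun _ _ => Finset.sum_congr rfl fun _ _ => by ring

lemma fderiv_fderiv_comp_affine {E F : Type*} [NormedAddCommGroup E] [NormedSpace ℝ E]
    [NormedAddCommGroup F] [NormedSpace ℝ F] {f : F → ℝ} (hf : ContDiff ℝ 2 f) (b : F)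
    (L : E →L[ℝ] F) (a u v : E) :
    fderiv ℝ (fderiv ℝ fun a => f (b + L a)) a u v =
      fderiv ℝ (fderiv ℝ f) (b + L a) (L u) (L v) := by
  have hL (a : E) : HasFDerivAt (fun a => b + L a) L a := L.hasFDerivAt.const_add b
  have h₁ (a : E) : fderiv ℝ (fun a => f (b + L a)) a = (fderiv ℝ f (b + L a)).comp L :=
    ((hf.differentiable (by norm_num) _).hasFDerivAt.comp a (hL a)).fderiv
  have hf₂ : Differentiable ℝ (fderiv ℝ f) :=
    (hf.fderiv_right (m := 1) (by norm_num)).differentiable (by norm_num)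
  have h₂ : HasFDerivAt (fun a => (fderiv ℝ f (b + L a)).comp L) _ a :=
    ((hf₂ _).hasFDerivAt.comp a (hL a)).clm_comp (hasFDerivAt_const L a)
  rw [funext h₁, h₂.fderiv]
  simp

lemma hess_comp_affine (hf : ContDiff ℝ 2 f) (b : Fin n → ℝ) (T : Matrix (Fin n) (Fin n) ℝ)
    (a : Fin n → ℝ) :
    hess (fun a => f (b + T *ᵥ a)) a = Tᵀ * hess f (b + T *ᵥ a) * T := by
  let L : (Fin n → ℝ) →L[ℝ] Fin n → ℝ := (Matrix.toLin' T).toContinuousLinearMap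
  have hcomp : ContDiff ℝ 2 fun a => f (b + L a) := hf.comp (contDiff_const.add L.contDiff)
  ext i j
  calc hess (fun a => f (b + L a)) a i j
      = fderiv ℝ (fderiv ℝ f) (b + L a) (L (Pi.single i 1)) (L (Pi.single j 1)) := by
        rw [hess_apply hcomp, fderiv_fderiv_comp_affine hf b L]
    _ = T.col i ⬝ᵥ hess f (b + L a) *ᵥ T.col j := by
        rw [dotProduct_hess_mulVec hf]
        simp [L]
    _ = (Tᵀ * hess f (b + L a) * T) i j := by
        rw [Matrix.mul_assoc]
        rfl

lemma posSemidef_hess (hf : ContDiff ℝ 2 f) (hconv : ConvexOn ℝ univ f) (x : Fin n → ℝ) :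
    (hess f x).PosSemidef := by
  refine .of_dotProduct_mulVec_nonneg ?_ fun v => ?_
  · ext i j
    have hsymm : IsSymmSndFDerivAt ℝ f x := hf.contDiffAt.isSymmSndFDerivAt (by simp)
    rw [Matrix.conjTranspose_apply, star_trivial, hess_apply hf, hess_apply hf, hsymm.eq]
  · rw [star_trivial, dotProduct_hess_mulVec hf]
    exact fderiv_fderiv_apply_self_nonneg hf hconv x v

lemma det_le_pow_of_dotProduct_mulVec_le {ι : Type*} [Fintype ι] [DecidableEq ι]
    {M : Matrix ι ι ℝ} (hM : M.PosSemidef) {k : ℝ}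
    (hk : ∀ v, v ⬝ᵥ M *ᵥ v ≤ k * (v ⬝ᵥ v)) : M.det ≤ k ^ Fintype.card ι := by
  have hle (i : ι) : hM.isHermitian.eigenvalues i ≤ k := by
    let v : EuclideanSpace ℝ ι := hM.isHermitian.eigenvectorBasis i
    have hunit : v.ofLp ⬝ᵥ v.ofLp = 1 := by
      have hinner := EuclideanSpace.inner_eq_star_dotProduct v v
      rwa [star_trivial, real_inner_self_eq_norm_sq,
        hM.isHermitian.eigenvectorBasis.orthonormal.1 i, one_pow, eq_comm] at hinner
    have := hk v.ofLp
    rw [hunit, mul_one] at this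
    simpa [hM.isHermitian.eigenvalues_eq] using this
  calc M.det = ∏ i, hM.isHermitian.eigenvalues i := hM.isHermitian.det_eq_prod_eigenvalues
    _ ≤ ∏ _i : ι, k := Finset.prod_le_prod (fun i _ => hM.eigenvalues_nonneg i) fun i _ => hle i
    _ = k ^ Fintype.card ι := by simp

lemma exists_mem_ball_det_hess_le (hf : ContDiff ℝ 2 f) (hconv : ConvexOn ℝ univ f)
    (hp : ConvexOn ℝ univ p) {c : Fin n → ℝ} {r k : ℝ} (hr : 0 < r) (hk : 0 ≤ k)
    (h : ∀ a ∈ sphere c r, f a + p a < f c + p c + k / 2 * r ^ 2) :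
    ∃ a ∈ ball c r, (hess f a).det ≤ k ^ n := by
  obtain ⟨a, ha, hD⟩ := exists_mem_ball_fderiv_fderiv_le hf hp hr hk h
  refine ⟨a, ha, ?_⟩
  simpa using det_le_pow_of_dotProduct_mulVec_le (posSemidef_hess hf hconv a)
    fun v => (dotProduct_hess_mulVec hf a v v).trans_le (hD v)

lemma exists_mem_ball_det_sq_mul_det_hess_le (hf : ContDiff ℝ 2 f) (hconv : ConvexOn ℝ univ f)
    (hp : ConvexOn ℝ univ p) (b : Fin n → ℝ) (T : Matrix (Fin n) (Fin n) ℝ) {c : Fin n → ℝ}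
    {r k : ℝ} (hr : 0 < r) (hk : 0 ≤ k)
    (h : ∀ a ∈ sphere c r,
      f (b + T *ᵥ a) + p (b + T *ᵥ a) < f (b + T *ᵥ c) + p (b + T *ᵥ c) + k / 2 * r ^ 2) :
    ∃ a ∈ ball c r, T.det ^ 2 * (hess f (b + T *ᵥ a)).det ≤ k ^ n := by
  have hconv_comp {g : (Fin n → ℝ) → ℝ} (hg : ConvexOn ℝ univ g) :
      ConvexOn ℝ univ fun a => g (b + T *ᵥ a) := by
    have := (hg.translate_right b).comp_linearMap (Matrix.toLin' T)
    simpa [Function.comp_def] using this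
  have hsmooth : ContDiff ℝ 2 fun a => f (b + T *ᵥ a) :=
    hf.comp (contDiff_const.add (Matrix.toLin' T).toContinuousLinearMap.contDiff)
  obtain ⟨a, ha, hdet⟩ :=
    exists_mem_ball_det_hess_le hsmooth (hconv_comp hconv) (hconv_comp hp) hr hk h
  refine ⟨a, ha, le_of_eq_of_le ?_ hdet⟩
  rw [hess_comp_affine hf, Matrix.det_mul, Matrix.det_mul, Matrix.det_transpose]
  ring

end Hessian

section Simplex

open Metric Set
open scoped Matrix

variable {ι : Type*} [Fintype ι]

lemma mulVec_mem_of_convex {κ : Type*} {K : Set (κ → ℝ)} (hK : Convex ℝ K) (h0 : 0 ∈ K)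
    {T : Matrix κ ι ℝ} (hT : ∀ i, T.col i ∈ K) {a : ι → ℝ} (ha : 0 ≤ a)
    (ha1 : ∑ i, a i ≤ 1) : T *ᵥ a ∈ K := by
  let weight : Option ι → ℝ := fun o => o.elim (1 - ∑ i, a i) a
  let vertex : Option ι → κ → ℝ := fun o => o.elim 0 T.col
  have hmem : ∑ o, weight o • vertex o ∈ K := by
    refine hK.sum_mem (fun o _ => ?_) (by simp [weight, Fintype.sum_option]) fun o _ => ?_
    · cases o with
      | none => exact sub_nonneg.2 ha1
      | some i => exact ha i
    · cases o with
      | none => exact h0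
      | some i => exact hT i
  convert hmem
  ext j
  simp [weight, vertex, Fintype.sum_option, Matrix.mulVec, dotProduct, mul_comm]

lemma mulVec_mem_of_mem_closedBall {κ : Type*} {K : Set (κ → ℝ)} (hK : Convex ℝ K)
    (h0 : 0 ∈ K) {T : Matrix κ ι ℝ} (hT : ∀ i, T.col i ∈ K) {a : ι → ℝ} {r : ℝ}
    (hr : 2 * Fintype.card ι * r ≤ 1) (ha : a ∈ closedBall (fun _ => r) r) : T *ᵥ a ∈ K := by
  have hcoord (i : ι) : |a i - r| ≤ r := (dist_le_pi_dist a (fun _ => r) i).trans ha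
  refine mulVec_mem_of_convex hK h0 hT (fun i => ?_) ?_
  · simpa using (abs_le.1 (hcoord i)).1
  · calc ∑ i, a i ≤ ∑ _i : ι, 2 * r :=
          Finset.sum_le_sum fun i _ => by linarith [(abs_le.1 (hcoord i)).2]
      _ = 2 * Fintype.card ι * r := by simp; ring
      _ ≤ 1 := hr

lemma exists_isMaxOn_abs_det [DecidableEq ι] {K : Set (ι → ℝ)} (hK : IsCompact K)
    (h0 : 0 ∈ interior K) :
    ∃ T : Matrix ι ι ℝ, T.det ≠ 0 ∧ (∀ i, T.col i ∈ K) ∧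
      ∀ S : Matrix ι ι ℝ, (∀ i, S.col i ∈ K) → |S.det| ≤ |T.det| := by
  have hcont : Continuous fun V : ι → ι → ℝ => |(Matrix.of V).det| :=
    (Continuous.matrix_det continuous_id).abs
  obtain ⟨V, hV, hmax⟩ := (isCompact_univ_pi fun _ : ι => hK).exists_isMaxOn
    ⟨0, fun _ _ => interior_subset h0⟩ hcont.continuousOn
  have hmax' (S : Matrix ι ι ℝ) (hS : ∀ i, S.col i ∈ K) : |S.det| ≤ |(Matrix.of V)ᵀ.det| := by
    rw [← S.det_transpose, (Matrix.of V).det_transpose]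
    exact hmax (a := Sᵀ) fun i _ => hS i
  refine ⟨(Matrix.of V)ᵀ, ?_, fun i => hV i (mem_univ i), hmax'⟩
  obtain ⟨ρ, hρ, hball⟩ := Metric.isOpen_iff.1 isOpen_interior 0 h0
  have hscaled : 0 < |((ρ / 2) • (1 : Matrix ι ι ℝ)).det| := by
    rw [Matrix.det_smul, Matrix.det_one]
    positivity
  refine abs_pos.1 (hscaled.trans_le (hmax' _ fun i => interior_subset (hball ?_)))
  have hcol : ((ρ / 2) • (1 : Matrix ι ι ℝ)).col i = Pi.single i (ρ / 2) := by
    ext j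
    simp [Matrix.one_apply, Pi.single_apply]
  rw [hcol, mem_ball_zero_iff, Pi.norm_single, Real.norm_of_nonneg (half_pos hρ).le]
  exact half_lt_self hρ

-- `T` maximizes `|det T|` among matrices with columns in `K`; by Cramer's rule the coordinates of
-- `x ∈ K` in this frame are ratios of such determinants.
lemma exists_matrix_subset_mulVec_image_closedBall {K : Set (ι → ℝ)}
    (hK : IsCompact K) (h0 : 0 ∈ interior K) :
    ∃ T : Matrix ι ι ℝ, (∀ i, T.col i ∈ K) ∧ K ⊆ (T *ᵥ ·) '' closedBall 0 1 := by
  classical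
  obtain ⟨T, hdet, hT, hmax⟩ := exists_isMaxOn_abs_det hK h0
  refine ⟨T, hT, fun x hx => ⟨T.det⁻¹ • T.cramer x, ?_, ?_⟩⟩
  · rw [mem_closedBall_zero_iff, pi_norm_le_iff_of_nonneg zero_le_one]
    intro i
    have hrepl : |(T.updateCol i x).det| ≤ |T.det| := by
      refine hmax _ fun j => ?_
      rcases eq_or_ne j i with rfl | hji
      · rwa [show (T.updateCol j x).col j = x from funext fun _ => T.updateCol_self]
      · rw [show (T.updateCol i x).col j = T.col j from funext fun _ => T.updateCol_ne hji]
        exact hT j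
    rw [Pi.smul_apply, Matrix.cramer_apply, smul_eq_mul, Real.norm_eq_abs, abs_mul, abs_inv]
    exact inv_mul_le_one_of_le₀ hrepl (abs_nonneg _)
  · simp [Matrix.mulVec_smul, Matrix.mulVec_cramer, smul_smul, hdet]

lemma volume_mulVec_image_closedBall [DecidableEq ι] (T : Matrix ι ι ℝ) {r : ℝ} (hr : 0 ≤ r) :
    volume ((T *ᵥ ·) '' closedBall 0 r) = ENNReal.ofReal (|T.det| * (2 * r) ^ Fintype.card ι) := by
  rw [ENNReal.ofReal_mul (abs_nonneg _), ← Real.volume_pi_closedBall 0 hr, ← LinearMap.det_toLin']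
  exact Measure.addHaar_image_linearMap volume (Matrix.toLin' T) _

end Simplex

section Sublevel

open Filter Metric Set
open scoped Matrix

lemma le_add_one_of_le_add_of_convexOn {E : Type*} [AddCommGroup E] [Module ℝ E] {w : E → ℝ}
    (hw : ConvexOn ℝ univ w) {x₀ x : E} {lam : ℝ} (hlam : 1 ≤ lam) (hx : w x ≤ w x₀ + lam) :
    w (x₀ + lam⁻¹ • (x - x₀)) ≤ w x₀ + 1 := by
  have hpos : 0 < lam := one_pos.trans_le hlam
  have hcomb : (1 - lam⁻¹) • x₀ + lam⁻¹ • x = x₀ + lam⁻¹ • (x - x₀) := by module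
  have hconv := hw.2 (mem_univ x₀) (mem_univ x) (sub_nonneg.2 (inv_le_one_of_one_le₀ hlam))
    (inv_nonneg.2 hpos.le) (by ring)
  calc w (x₀ + lam⁻¹ • (x - x₀)) ≤ (1 - lam⁻¹) * w x₀ + lam⁻¹ * w x := hcomb ▸ hconv
    _ ≤ (1 - lam⁻¹) * w x₀ + lam⁻¹ * (w x₀ + lam) := by gcongr
    _ = w x₀ + 1 := by field_simp; ring

variable {n : ℕ} {f p : (Fin n → ℝ) → ℝ} {x₀ : Fin n → ℝ} {δ : ℝ}

lemma exists_matrix_det_sq_mul_le (hn : 1 ≤ n) (hf : ContDiff ℝ 2 f) (hconv : ConvexOn ℝ univ f)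
    (hp : ConvexOn ℝ univ p) (hmin : ∀ x, f x₀ + p x₀ ≤ f x + p x)
    (hK : IsCompact {x | f x + p x ≤ f x₀ + p x₀ + 1})
    (hdet : ∀ x, f x + p x ≤ f x₀ + p x₀ + 1 → δ ≤ (hess f x).det) :
    ∃ T : Matrix (Fin n) (Fin n) ℝ, T.det ^ 2 * δ ≤ (9 * n ^ 2) ^ n ∧
      {v | f (x₀ + v) + p (x₀ + v) ≤ f x₀ + p x₀ + 1} ⊆ (T *ᵥ ·) '' closedBall 0 1 := by
  set K : Set (Fin n → ℝ) := {v | f (x₀ + v) + p (x₀ + v) ≤ f x₀ + p x₀ + 1}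
  have hw : ConvexOn ℝ univ fun v => f (x₀ + v) + p (x₀ + v) := by
    simpa [Function.comp_def] using! (hconv.add hp).translate_right x₀
  have hKconv : Convex ℝ K := by simpa using hw.convex_le (f x₀ + p x₀ + 1)
  have h0 : 0 ∈ interior K := by
    have hcont := hw.locallyLipschitz.continuous.continuousAt (x := 0)
    refine mem_interior_iff_mem_nhds.2 (hcont.eventually_le_const ?_)
    simp only [add_zero, lt_add_iff_pos_right, zero_lt_one]
  obtain ⟨T, hT, hKT⟩ := exists_matrix_subset_mulVec_image_closedBall
    ((Homeomorph.addLeft x₀).isCompact_preimage.2 hK) h0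
  have : (0 : ℝ) < n := by exact_mod_cast hn
  let r : ℝ := 1 / (2 * n)
  have hbox {a : Fin n → ℝ} (ha : a ∈ closedBall (fun _ => r) r) : T *ᵥ a ∈ K := by
    refine mulVec_mem_of_mem_closedBall hKconv (interior_subset h0) hT (le_of_eq ?_) ha
    simp only [r, Fintype.card_fin]
    field_simp
  have hkr : 9 * (n : ℝ) ^ 2 / 2 * r ^ 2 = 9 / 8 := by
    simp only [r]
    field_simp
    norm_num
  obtain ⟨a, ha, hle⟩ := exists_mem_ball_det_sq_mul_det_hess_le hf hconv hp x₀ T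
    (c := fun _ => r) (r := r) (k := 9 * n ^ 2) (by positivity) (by positivity) fun a ha => by
      have hupper : f (x₀ + T *ᵥ a) + p (x₀ + T *ᵥ a) ≤ f x₀ + p x₀ + 1 :=
        hbox (sphere_subset_closedBall ha)
      linarith [hmin (x₀ + T *ᵥ fun _ => r)]
  refine ⟨T, le_trans ?_ hle, hKT⟩
  gcongr
  exact hdet _ (hbox (ball_subset_closedBall ha))

lemma volume_sublevel_le_of_le_det_hess (hn : 1 ≤ n) (hf : ContDiff ℝ 2 f)
    (hconv : ConvexOn ℝ univ f) (hp : ConvexOn ℝ univ p)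
    (hmin : ∀ x, f x₀ + p x₀ ≤ f x + p x) (hK : IsCompact {x | f x + p x ≤ f x₀ + p x₀ + 1})
    (hδ : 0 < δ) (hdet : ∀ x, f x + p x ≤ f x₀ + p x₀ + 1 → δ ≤ (hess f x).det)
    {lam : ℝ} (hlam : 1 ≤ lam) :
    volume {x | f x + p x ≤ f x₀ + p x₀ + lam} ≤
      ENNReal.ofReal (√((9 * n ^ 2) ^ n / δ) * (2 * lam) ^ n) := by
  obtain ⟨T, hTdet, hKT⟩ := exists_matrix_det_sq_mul_le hn hf hconv hp hmin hK hdet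
  have hpos : 0 < lam := one_pos.trans_le hlam
  have hsub : {x | f x + p x ≤ f x₀ + p x₀ + lam} ⊆
      (x₀ + ·) '' ((T *ᵥ ·) '' closedBall 0 lam) := by
    intro x hx
    obtain ⟨a, ha, hTa⟩ := hKT (le_add_one_of_le_add_of_convexOn (hconv.add hp) hlam hx)
    refine ⟨_, ⟨lam • a, ?_, rfl⟩, ?_⟩
    · simpa [norm_smul, abs_of_pos hpos, hpos] using ha
    · simp_all [Matrix.mulVec_smul, smul_smul, hpos.ne']
  calc volume {x | f x + p x ≤ f x₀ + p x₀ + lam}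
      ≤ volume ((x₀ + ·) '' ((T *ᵥ ·) '' closedBall 0 lam)) := measure_mono hsub
    _ = ENNReal.ofReal (|T.det| * (2 * lam) ^ n) := by
        rw [image_add_left, measure_preimage_add, volume_mulVec_image_closedBall T hpos.le,
          Fintype.card_fin]
    _ ≤ ENNReal.ofReal (√((9 * n ^ 2) ^ n / δ) * (2 * lam) ^ n) := by
        gcongr
        exact Real.abs_le_sqrt ((le_div_iff₀ hδ).2 hTdet)

end Sublevel

section Polytope

open Metric Set
open scoped Matrix

lemma isBounded_setOf_neg_one_le_dotProduct {ι : Type*} [Fintype ι]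
    {s : Set (ι → ℝ)} (hs : 0 ∈ interior (convexHull ℝ s)) :
    Bornology.IsBounded {y : ι → ℝ | ∀ z ∈ s, -1 ≤ y ⬝ᵥ z} := by
  classical
  obtain ⟨ρ, hρ, hball⟩ := nhds_basis_closedBall.mem_iff.1 (mem_interior_iff_mem_nhds.1 hs)
  refine (isBounded_closedBall (x := 0) (r := 1 / ρ)).subset fun y hy => ?_
  have hhull : convexHull ℝ s ⊆ {z | -1 ≤ y ⬝ᵥ z} :=
    convexHull_min hy (convex_halfSpace_ge
      ⟨dotProduct_add y, fun a z => dotProduct_smul a y z⟩ (-1))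
  have hcoord (j : ι) {σ : ℝ} (hσ : |σ| ≤ ρ) : -1 ≤ y j * σ := by
    have hmem : Pi.single j σ ∈ closedBall (0 : ι → ℝ) ρ := by simpa [Pi.norm_single] using hσ
    simpa using hhull (hball hmem)
  rw [mem_closedBall_zero_iff, pi_norm_le_iff_of_nonneg (by positivity)]
  intro j
  rw [Real.norm_eq_abs, abs_le]
  have hplus := hcoord j (abs_of_pos hρ).le
  have hminus := hcoord j (σ := -ρ) (by rw [abs_neg, abs_of_pos hρ])
  constructor
  · rw [← neg_div, div_le_iff₀ hρ]
    exact hplus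
  · rw [le_div_iff₀ hρ]
    linarith

variable {n d : ℕ} {N : Fin d → Fin n → ℤ}

lemma isCompact_Pset
    (hQ : (0 : Fin n → ℝ) ∈ interior (convexHull ℝ (range fun i => fun j => (N i j : ℝ)))) :
    IsCompact (Pset N) := by
  refine isCompact_of_isClosed_isBounded ?_
    ((isBounded_setOf_neg_one_le_dotProduct hQ).subset fun y hy => forall_mem_range.2 hy)
  simp only [Pset, ofPred_forall]
  exact isClosed_iInter fun i => isClosed_le continuous_const (by fun_prop)

lemma zero_mem_interior_Pset (N : Fin d → Fin n → ℤ) : 0 ∈ interior (Pset N) := by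
  refine mem_interior_iff_mem_nhds.2 (Filter.eventually_all.2 fun i => ?_)
  have hcont : Continuous fun y : Fin n → ℝ => ∑ j, y j * (N i j : ℝ) := by fun_prop
  exact hcont.continuousAt.eventually_const_le (by simp)

lemma continuous_dotp (x : Fin n → ℝ) : Continuous (dotp x) := by
  unfold dotp
  fun_prop

lemma exists_dotp_le (hP : IsCompact (Pset N)) (c : Fin n → ℝ) :
    ∃ B, ∀ y ∈ Pset N, dotp c y ≤ B := by
  obtain ⟨B, hB⟩ := hP.bddAbove_image (continuous_dotp c).continuousOn
  exact ⟨B, fun y hy => hB (mem_image_of_mem _ hy)⟩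

lemma continuous_u0 (N : Fin d → Fin n → ℤ) : Continuous (u0 N) := by
  refine continuous_finsetSum _ fun i _ => Real.continuous_mul_log.comp ?_
  unfold lfun
  fun_prop

lemma bddAbove_dotp_sub_u0 (hP : IsCompact (Pset N)) (x : Fin n → ℝ) :
    BddAbove ((fun y => dotp x y - u0 N y) '' interior (Pset N)) :=
  (hP.bddAbove_image ((continuous_dotp x).sub (continuous_u0 N)).continuousOn).mono
    (image_mono interior_subset)

lemma phi0_nonneg (hP : IsCompact (Pset N)) (x : Fin n → ℝ) : 0 ≤ phi0 N x :=
  le_csSup (bddAbove_dotp_sub_u0 hP x)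
    ⟨0, zero_mem_interior_Pset N, by simp [dotp, u0, lfun]⟩

lemma convexOn_sSup_image {E Y : Type*} [AddCommGroup E] [Module ℝ E] {s : Set E} {S : Set Y}
    {F : E → Y → ℝ} (hS : S.Nonempty) (hs : Convex ℝ s)
    (hF : ∀ y ∈ S, ConvexOn ℝ s (F · y)) (hbdd : ∀ x ∈ s, BddAbove (F x '' S)) :
    ConvexOn ℝ s fun x => sSup (F x '' S) := by
  refine ⟨hs, fun x hx z hz a b ha hb hab => csSup_le (hS.image _) ?_⟩
  rintro _ ⟨y, hy, rfl⟩
  refine ((hF y hy).2 hx hz ha hb hab).trans ?_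
  gcongr
  exacts [le_csSup (hbdd x hx) ⟨y, hy, rfl⟩, le_csSup (hbdd z hz) ⟨y, hy, rfl⟩]

lemma convexOn_phi0 (hP : IsCompact (Pset N)) : ConvexOn ℝ univ (phi0 N) := by
  refine convexOn_sSup_image ⟨0, zero_mem_interior_Pset N⟩ convex_univ (fun y _ => ?_)
    fun x _ => bddAbove_dotp_sub_u0 hP x
  have hlin : IsLinearMap ℝ fun x => dotp x y :=
    ⟨fun x z => add_dotProduct x z y, fun a x => smul_dotProduct a x y⟩
  exact (hlin.mk'.convexOn convex_univ).sub (concaveOn_const (u0 N y) convex_univ)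

end Polytope

section Solution

open Filter Metric Set Topology

lemma fderiv_eq_zero_of_grad_eq_zero {n : ℕ} {f : (Fin n → ℝ) → ℝ} {z : Fin n → ℝ}
    (hz : grad f z = 0) : fderiv ℝ f z = 0 :=
  ContinuousLinearMap.coe_injective <| LinearMap.pi_ext' fun j =>
    LinearMap.ext_ring (congrFun hz j)

lemma hess_const_mul {n : ℕ} (t : ℝ) (f : (Fin n → ℝ) → ℝ) (x : Fin n → ℝ) :
    hess (fun y => t * f y) x = t • hess f x := by
  ext i j
  simp [hess, ← smul_eq_mul, ← Pi.smul_def, fderiv_const_smul_field]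

lemma isCompact_setOf_le_of_tendsto_cocompact {X α : Type*} [TopologicalSpace X]
    [LinearOrder α] [NoMaxOrder α] [TopologicalSpace α] [OrderClosedTopology α] {f : X → α}
    (hf : Continuous f) (hlim : Tendsto f (cocompact X) atTop) (a : α) :
    IsCompact {x | f x ≤ a} := by
  obtain ⟨K, hK, hKsub⟩ := mem_cocompact.1 (hlim.eventually_gt_atTop a)
  refine hK.of_isClosed_subset (isClosed_le hf continuous_const) fun x hx => ?_
  by_contra hxK
  exact not_lt_of_ge (show f x ≤ a from hx) (hKsub hxK)

lemma sqrt_pow_div_mul_exp (a ε : ℝ) (n : ℕ) (A m : ℝ) :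
    √(a ^ n / (ε ^ n * Real.exp (-A - m))) = √((a / ε) ^ n * Real.exp A) * Real.exp (m / 2) := by
  have hexp : Real.exp (m / 2) = √(Real.exp m) := Real.exp_half m
  rw [hexp, ← Real.sqrt_mul' _ (Real.exp_nonneg m), mul_assoc, ← Real.exp_add, div_pow,
    show -A - m = -(A + m) by ring, Real.exp_neg]
  field_simp

variable {n d : ℕ} {N : Fin d → Fin n → ℤ} {c : Fin n → ℝ} {c₀ t : ℝ} {φ : (Fin n → ℝ) → ℝ}

namespace IsSolution

lemma tendsto_cocompact_atTop (hφ : IsSolution N c c₀ t φ) :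
    Tendsto φ (cocompact (Fin n → ℝ)) atTop := by
  obtain ⟨hsmooth, hconv, hbij, -⟩ := hφ
  obtain ⟨z, -, hz⟩ := hbij.surjOn (zero_mem_interior_Pset N)
  exact tendsto_cocompact_atTop_of_strictConvexOn hconv <| le_of_convexOn_of_fderiv_eq_zero
    hconv.convexOn (hsmooth.differentiable (by simp)) (fderiv_eq_zero_of_grad_eq_zero hz)

lemma tendsto_wfun_cocompact_atTop (hφ : IsSolution N c c₀ t φ) (hP : IsCompact (Pset N))
    (ht₀ : 0 < t) (ht₁ : t ≤ 1) : Tendsto (wfun N t φ) (cocompact (Fin n → ℝ)) atTop :=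
  tendsto_atTop_mono
    (fun x => le_add_of_nonneg_right (mul_nonneg (sub_nonneg.2 ht₁) (phi0_nonneg hP x)))
    (hφ.tendsto_cocompact_atTop.const_mul_atTop ht₀)

lemma continuous_wfun (hφ : IsSolution N c c₀ t φ) (hP : IsCompact (Pset N)) (ht₀ : 0 ≤ t)
    (ht₁ : t ≤ 1) : Continuous (wfun N t φ) :=
  ((hφ.2.1.convexOn.smul ht₀).add
    ((convexOn_phi0 hP).smul (sub_nonneg.2 ht₁))).locallyLipschitz.continuous

lemma exp_le_det_hess (hφ : IsSolution N c c₀ t φ) {B m : ℝ} (hB : ∀ y ∈ Pset N, dotp c y ≤ B)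
    {x : Fin n → ℝ} (hx : wfun N t φ x ≤ m + 1) :
    Real.exp (-(c₀ + 1 + B) - m) ≤ (hess φ x).det := by
  obtain ⟨-, -, hbij, -, heq⟩ := hφ
  rw [heq x, Real.exp_le_exp]
  linarith [hB _ (interior_subset (hbij.mapsTo (mem_univ x)))]

lemma volume_wfun_sublevel_le (hφ : IsSolution N c c₀ t φ) (hn : 1 ≤ n)
    (hP : IsCompact (Pset N)) {B : ℝ} (hB : ∀ y ∈ Pset N, dotp c y ≤ B) (ht₀ : 0 < t)
    (ht₁ : t ≤ 1) {x₀ : Fin n → ℝ} (hmin : ∀ x, wfun N t φ x₀ ≤ wfun N t φ x) {lam : ℝ}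
    (hlam : 1 ≤ lam) :
    volume {x | wfun N t φ x ≤ wfun N t φ x₀ + lam} ≤
      ENNReal.ofReal (2 ^ n * √((9 * n ^ 2 / t) ^ n * Real.exp (c₀ + 1 + B)) * lam ^ n *
        Real.exp (wfun N t φ x₀ / 2)) := by
  let δ : ℝ := t ^ n * Real.exp (-(c₀ + 1 + B) - wfun N t φ x₀)
  have hdet (x : Fin n → ℝ) (hx : wfun N t φ x ≤ wfun N t φ x₀ + 1) :
      δ ≤ (hess (fun y => t * φ y) x).det := by
    rw [hess_const_mul, Matrix.det_smul, Fintype.card_fin]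
    exact mul_le_mul_of_nonneg_left (hφ.exp_le_det_hess hB hx) (by positivity)
  have hsmooth : ContDiff ℝ 2 fun x => t * φ x :=
    contDiff_const.mul (hφ.1.of_le (by norm_cast))
  have hcompact : IsCompact {x | wfun N t φ x ≤ wfun N t φ x₀ + 1} :=
    isCompact_setOf_le_of_tendsto_cocompact (hφ.continuous_wfun hP ht₀.le ht₁)
      (hφ.tendsto_wfun_cocompact_atTop hP ht₀ ht₁) _
  have hvol := volume_sublevel_le_of_le_det_hess hn hsmooth (hφ.2.1.convexOn.smul ht₀.le)
    ((convexOn_phi0 hP).smul (sub_nonneg.2 ht₁)) hmin hcompact (by positivity) hdet hlam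
  refine hvol.trans_eq (congrArg ENNReal.ofReal ?_)
  rw [sqrt_pow_div_mul_exp, mul_pow]
  ring

end IsSolution

end Solution

/-- Uniform sublevel-set volume estimate: `vol(A_λ) ≤ C λⁿ e^{m_t/2}` for all `λ ≥ 1`,
where `A_λ = {w_t ≤ m_t + λ}` and `m_t = inf_{ℝⁿ} w_t`. -/
theorem sublevel_volume_bound {n d : ℕ} (hn : 1 ≤ n) (N : Fin d → Fin n → ℤ)
    (hQ : (0 : Fin n → ℝ) ∈ interior (convexHull ℝ (Set.range fun i => fun j => (N i j : ℝ))))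
    (c : Fin n → ℝ) (c₀ : ℝ) (ε₀ : ℝ) (hε₀ : ε₀ ∈ Set.Ioc (0 : ℝ) 1) :
    ∃ C > 0, ∀ t ∈ Set.Icc ε₀ 1, ∀ φ : (Fin n → ℝ) → ℝ, IsSolution N c c₀ t φ →
      ∀ lam : ℝ, 1 ≤ lam →
        volume {x : Fin n → ℝ | wfun N t φ x ≤ sInf (Set.range (wfun N t φ)) + lam} ≤
          ENNReal.ofReal (C * lam ^ n * Real.exp (sInf (Set.range (wfun N t φ)) / 2)) := by
  have hP := isCompact_Pset hQ
  obtain ⟨B, hB⟩ := exists_dotp_le hP c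
  have hε_pos : 0 < ε₀ := hε₀.1
  have : (0 : ℝ) < n := by exact_mod_cast hn
  refine ⟨2 ^ n * √((9 * n ^ 2 / ε₀) ^ n * Real.exp (c₀ + 1 + B)), by positivity, ?_⟩
  rintro t ⟨hεt, ht_le⟩ φ hφ lam hlam
  have ht_pos : 0 < t := hε_pos.trans_le hεt
  obtain ⟨x₀, hmin⟩ := (hφ.continuous_wfun hP ht_pos.le ht_le).exists_forall_le
    (hφ.tendsto_wfun_cocompact_atTop hP ht_pos ht_le)
  rw [IsLeast.csInf_eq ⟨Set.mem_range_self x₀, Set.forall_mem_range.2 hmin⟩]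
  refine (hφ.volume_wfun_sublevel_le hn hP hB ht_pos ht_le hmin hlam).trans ?_
  gcongr
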